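/- Let φ be a 2-cocycle of Cend_{1,x} with values in a conformal bimodule M. If there exists an element ψ₁ ∈ M such that φ₁(x, x) = x ∘₁ ψ₁ − ψ₁ + ψ₁ ∘₁ x, then φ is a 2-coboundary. -/

import Mathlib

open Finset

/-- An associative conformal algebra over a field `F` of characteristic zero:
a left `F[D]`-module `A` (the action of `D` is recorded by the linear map `D`)
equipped with `F`-bilinear products `∘ₙ`, `n ∈ ℤ₊`, satisfying locality,
the `D`-rules and the conformal associativity axiom. -/
structure ConfAlg (F : Type*) [Field F] (A : Type*) [AddCommGroup A] [Module F A] where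
  D : A →ₗ[F] A
  mul : ℕ → A →ₗ[F] A →ₗ[F] A
  locality : ∀ a b : A, ∃ N : ℕ, ∀ n, N ≤ n → mul n a b = 0
  D_left : ∀ (n : ℕ) (a b : A), mul n (D a) b = -((n : F) • mul (n - 1) a b)
  D_right : ∀ (n : ℕ) (a b : A),
    mul n a (D b) = D (mul n a b) + (n : F) • mul (n - 1) a b
  assoc : ∀ (n m : ℕ) (a b c : A),
    mul m (mul n a b) c =
      ∑ s ∈ Finset.range (n + 1),
        ((-1 : F) ^ s * (n.choose s : F)) • mul (n - s) a (mul (m + s) b c)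

/-- `A`, with conformal structure `CA`, is (a copy of) the conformal algebra
`Cend_{1,x}`: the family `xB k = x^k`, `k ≥ 1`, together with all its
`D`-derivatives `D^i x^k`, is a free generating family (i.e. `{x^k : k ≥ 1}` is a
basis of `A` as a free `F[D]`-module) and the products on the basis are
`x^k ∘ₙ x^l = l(l-1)⋯(l-n+1) x^{k+l-n}` (zero for `n > l`). -/
def IsCend1x {F : Type*} [Field F] {A : Type*} [AddCommGroup A] [Module F A]
    (CA : ConfAlg F A) (xB : ℕ → A) : Prop :=
  (LinearIndependent F fun p : ℕ × {k : ℕ // 1 ≤ k} => (CA.D ^ p.1) (xB p.2.1)) ∧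
  (Submodule.span F (Set.range fun p : ℕ × {k : ℕ // 1 ≤ k} => (CA.D ^ p.1) (xB p.2.1)) = ⊤) ∧
  ∀ (k l n : ℕ), 1 ≤ k → 1 ≤ l →
    CA.mul n (xB k) (xB l) = (l.descFactorial n : F) • xB (k + l - n)

/-- A conformal bimodule `M` over the associative conformal algebra `(A, CA)`. -/
structure ConfBimod {F : Type*} [Field F] {A : Type*} [AddCommGroup A] [Module F A]
    (CA : ConfAlg F A) (M : Type*) [AddCommGroup M] [Module F M] where
  D : M →ₗ[F] M
  lmul : ℕ → A →ₗ[F] M →ₗ[F] M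
  rmul : ℕ → M →ₗ[F] A →ₗ[F] M
  loc_left : ∀ (a : A) (u : M), ∃ N : ℕ, ∀ n, N ≤ n → lmul n a u = 0
  loc_right : ∀ (u : M) (a : A), ∃ N : ℕ, ∀ n, N ≤ n → rmul n u a = 0
  D_la : ∀ (n : ℕ) (a : A) (u : M), lmul n (CA.D a) u = -((n : F) • lmul (n - 1) a u)
  D_lu : ∀ (n : ℕ) (a : A) (u : M),
    lmul n a (D u) = D (lmul n a u) + (n : F) • lmul (n - 1) a u
  D_ru : ∀ (n : ℕ) (u : M) (a : A), rmul n (D u) a = -((n : F) • rmul (n - 1) u a)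
  D_ra : ∀ (n : ℕ) (u : M) (a : A),
    rmul n u (CA.D a) = D (rmul n u a) + (n : F) • rmul (n - 1) u a
  assoc_aau : ∀ (m n : ℕ) (a b : A) (u : M),
    lmul n (CA.mul m a b) u =
      ∑ s ∈ Finset.range (m + 1),
        ((-1 : F) ^ s * (m.choose s : F)) • lmul (m - s) a (lmul (n + s) b u)
  assoc_uaa : ∀ (m n : ℕ) (u : M) (a b : A),
    rmul n (rmul m u a) b =
      ∑ s ∈ Finset.range (m + 1),
        ((-1 : F) ^ s * (m.choose s : F)) • rmul (m - s) u (CA.mul (n + s) a b)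
  assoc_aua : ∀ (m n : ℕ) (a : A) (u : M) (b : A),
    rmul n (lmul m a u) b =
      ∑ s ∈ Finset.range (m + 1),
        ((-1 : F) ^ s * (m.choose s : F)) • lmul (m - s) a (rmul (n + s) u b)

/-- A 2-cochain of a conformal algebra `(A, CA)` with coefficients in the
conformal bimodule `(M, B)`: a family of `F`-bilinear maps `f s : A × A → M`
satisfying the `D`-rules and locality. -/
structure Cochain2 {F : Type*} [Field F] {A : Type*} [AddCommGroup A] [Module F A]
    {M : Type*} [AddCommGroup M] [Module F M]
    (CA : ConfAlg F A) (B : ConfBimod CA M) where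
  f : ℕ → A →ₗ[F] A →ₗ[F] M
  D_left : ∀ (s : ℕ) (a b : A), f s (CA.D a) b = -((s : F) • f (s - 1) a b)
  D_right : ∀ (s : ℕ) (a b : A),
    f s a (CA.D b) = B.D (f s a b) + (s : F) • f (s - 1) a b
  loc : ∀ a b : A, ∃ N : ℕ, ∀ s, N ≤ s → f s a b = 0

/-- The 2-cocycle condition. -/
def IsCocycle {F : Type*} [Field F] {A : Type*} [AddCommGroup A] [Module F A]
    {M : Type*} [AddCommGroup M] [Module F M]
    {CA : ConfAlg F A} {B : ConfBimod CA M} (φ : Cochain2 CA B) : Prop :=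
  ∀ (n m : ℕ) (a b c : A),
    B.lmul n a (φ.f m b c) + φ.f n a (CA.mul m b c) =
      ∑ s ∈ Finset.range (n + 1), (n.choose s : F) •
        (φ.f (m + s) (CA.mul (n - s) a b) c + B.rmul (m + s) (φ.f (n - s) a b) c)

/-- `φ` is a 2-coboundary: `φ = δτ` for some `H`-linear 1-cochain `τ : A → M`. -/
def IsCoboundary {F : Type*} [Field F] {A : Type*} [AddCommGroup A] [Module F A]
    {M : Type*} [AddCommGroup M] [Module F M]
    {CA : ConfAlg F A} {B : ConfBimod CA M} (φ : Cochain2 CA B) : Prop :=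
  ∃ τ : A →ₗ[F] M, (∀ a : A, τ (CA.D a) = B.D (τ a)) ∧
    ∀ (n : ℕ) (a b : A),
      φ.f n a b = B.lmul n a (τ b) - τ (CA.mul n a b) + B.rmul n (τ a) b

/-!
The cocycle `φ` makes `A × M` a conformal algebra in which `M` is an ideal with zero product, and
`φ` is a coboundary exactly when this extension of `A` splits. Since `Cend_{1,x}` is presented by
the generator `x` and the relations `x ∘₁ x = x`, `x ∘ₙ x = 0` for `n ≥ 2`, a splitting is a lift
`X` of `x` satisfying these relations. The hypothesis on `φ₁(x, x)` says that `X = (x, -ψ₁)`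
satisfies `X ∘₁ X = X`. The elements `X ∘ₙ X` with `n ≥ 2` lie in `M` and vanish for large `n` by
locality. Expanding `X ∘ₙ (X ∘₁ X)` shows in characteristic zero, by descending induction on `n`,
first that `X` acts on them from the right as `x` acts on its powers, and then that they vanish.
-/

section BinomialInversion

variable {R V : Type*} [CommRing R] [AddCommGroup V] [Module R V] {S T : ℕ → ℕ → V}

theorem eq_sum_choose_smul_of_eq_alternating_sum
    (h : ∀ n m, T n m =
      ∑ s ∈ range (n + 1), ((-1 : R) ^ s * (n.choose s : R)) • S (n - s) (m + s)) (n m : ℕ) :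
    S n m = ∑ s ∈ range (n + 1), (n.choose s : R) • T (n - s) (m + s) := by
  -- Along the diagonal `i + j = n + m`, `T` is the sequence of iterated differences of `S` at `0`.
  let g : ℕ → V := fun i => S i (n + m - i)
  have iter_fwdDiff_eq (k : ℕ) (hk : k ≤ n) : (fwdDiff 1)^[k] g 0 = T k (n + m - k) := by
    rw [fwdDiff_iter_eq_sum_shift, h, ← sum_range_reflect]
    refine sum_congr rfl fun s hs => ?_
    have hs : s ≤ k := mem_range_succ_iff.1 hs
    rw [show k + 1 - 1 - s = k - s by omega, Nat.sub_sub_self hs, Nat.choose_symm hs,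
      ← Int.cast_smul_eq_zsmul R]
    simp only [g, zero_add, smul_eq_mul, mul_one]
    rw [show n + m - (k - s) = n + m - k + s by omega]
    push_cast
    rfl
  calc S n m = g (0 + n • 1) := by simp [g]
    _ = ∑ k ∈ range (n + 1), n.choose k • (fwdDiff 1)^[k] g 0 := shift_eq_sum_fwdDiff_iter ..
    _ = ∑ s ∈ range (n + 1), (n.choose s : R) • T (n - s) (m + s) := by
      rw [← sum_range_reflect]
      refine sum_congr rfl fun s hs => ?_
      have hs : s ≤ n := mem_range_succ_iff.1 hs
      rw [show n + 1 - 1 - s = n - s by omega, iter_fwdDiff_eq _ (n.sub_le s),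
        Nat.choose_symm hs, Nat.cast_smul_eq_nsmul, show n + m - (n - s) = m + s by omega]

theorem eq_alternating_sum_iff_eq_sum_choose_smul :
    (∀ n m, T n m =
      ∑ s ∈ range (n + 1), ((-1 : R) ^ s * (n.choose s : R)) • S (n - s) (m + s)) ↔
      ∀ n m, S n m = ∑ s ∈ range (n + 1), (n.choose s : R) • T (n - s) (m + s) := by
  refine ⟨eq_sum_choose_smul_of_eq_alternating_sum, fun h n m => ?_⟩
  have sign_mul_self (k : ℕ) : (-1 : R) ^ k * (-1) ^ k = 1 := by
    rw [← mul_pow, neg_one_mul, neg_neg, one_pow]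
  have sign_split {k s : ℕ} (hs : s ≤ k) : (-1 : R) ^ k = (-1) ^ s * (-1) ^ (k - s) := by
    rw [← pow_add, Nat.add_sub_of_le hs]
  -- Multiplication by `(-1) ^ n` exchanges the two transforms.
  have signed : (-1 : R) ^ n • T n m =
      ∑ s ∈ range (n + 1), (n.choose s : R) • (-1 : R) ^ (n - s) • S (n - s) (m + s) :=
    eq_sum_choose_smul_of_eq_alternating_sum (S := fun i j => (-1 : R) ^ i • T i j)
      (T := fun i j => (-1 : R) ^ i • S i j) (fun i j => by
        rw [h, smul_sum]
        refine sum_congr rfl fun s hs => ?_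
        rw [smul_smul, smul_smul, sign_split (mem_range_succ_iff.1 hs)]
        congr 1
        ring) n m
  calc T n m = (-1 : R) ^ n • (-1 : R) ^ n • T n m := by rw [smul_smul, sign_mul_self, one_smul]
    _ = ∑ s ∈ range (n + 1), ((-1 : R) ^ s * (n.choose s : R)) • S (n - s) (m + s) := by
      rw [signed, smul_sum]
      refine sum_congr rfl fun s hs => ?_
      rw [smul_smul, smul_smul, sign_split (mem_range_succ_iff.1 hs)]
      congr 1
      linear_combination (-1) ^ s * (n.choose s : R) * sign_mul_self (n - s)

end BinomialInversion

namespace ConfAlg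

variable {F E : Type*} [Field F] [AddCommGroup E] [Module F E] (C : ConfAlg F E)

theorem mul_zero_mul (m : ℕ) (a b c : E) :
    C.mul m (C.mul 0 a b) c = C.mul 0 a (C.mul m b c) := by
  simp [C.assoc 0 m a b c]

theorem mul_mul_eq_sum (n m : ℕ) (a b c : E) :
    C.mul n a (C.mul m b c) =
      ∑ s ∈ range (n + 1), (n.choose s : F) • C.mul (m + s) (C.mul (n - s) a b) c :=
  eq_sum_choose_smul_of_eq_alternating_sum (S := fun n m => C.mul n a (C.mul m b c))
    (T := fun n m => C.mul m (C.mul n a b) c) (fun n m => C.assoc n m a b c) n m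

variable {C} {X : E}

variable (C X) in
/-- The power `X ^ (k + 1)` with respect to the associative product `∘₀`. The exponent is shifted
since `E` has no unit. -/
def powSucc : ℕ → E
  | 0 => X
  | k + 1 => C.mul 0 X (powSucc k)

/-- The coefficient vanishes whenever the subtractions are truncated. -/
theorem descFactorial_smul_powSucc {l k : ℕ} (hlk : l ≤ k) (n : ℕ) :
    (l.descFactorial n : F) • C.powSucc X (k + 1 - n) =
      (l.descFactorial n : F) • C.mul 0 X (C.powSucc X (k - n)) := by
  rcases le_or_gt n l with hn | hn
  · rw [Nat.succ_sub (hn.trans hlk), powSucc]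
  · simp [Nat.descFactorial_of_lt hn]

section Presentation

variable (h₁ : C.mul 1 X X = X) (h₂ : ∀ n, 2 ≤ n → C.mul n X X = 0)
include h₁ h₂

theorem mul_succ_mul_self (n m : ℕ) (c : E) :
    C.mul (n + 1) X (C.mul m X c) =
      ((n + 1 : ℕ) : F) • C.mul (m + n) X c + C.mul 0 X (C.mul (m + n + 1) X c) := by
  rw [mul_mul_eq_sum, sum_range_succ, sum_range_succ, sum_eq_zero, Nat.sub_self,
    show n + 1 - n = 1 by omega, h₁, mul_zero_mul, zero_add, Nat.choose_self,
    Nat.choose_succ_self_right, Nat.cast_one, one_smul, add_assoc m]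
  intro s hs
  have hs := mem_range.1 hs
  rw [h₂ (n + 1 - s) (by omega), map_zero, LinearMap.zero_apply, smul_zero]

theorem mul_self_powSucc (n l : ℕ) :
    C.mul n X (C.powSucc X l) = ((l + 1).descFactorial n : F) • C.powSucc X (l + 1 - n) := by
  induction l generalizing n with
  | zero =>
    match n with
    | 0 => simp [powSucc]
    | 1 => simpa [powSucc] using h₁
    | n + 2 => simp [powSucc, h₂ (n + 2) (by omega)]
  | succ l ih =>
    match n with
    | 0 => simp [powSucc]
    | n + 1 =>
      have coeff : (n + 1) * (l + 1).descFactorial n + (l + 1).descFactorial (n + 1) =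
          (l + 2).descFactorial (n + 1) := by
        rw [Nat.succ_descFactorial_succ (l + 1), Nat.descFactorial_succ, ← add_mul]
        rcases le_or_gt n (l + 1) with hn | hn
        · congr 1
          omega
        · simp [Nat.descFactorial_of_lt hn]
      rw [powSucc, mul_succ_mul_self h₁ h₂, zero_add, ih, ih, map_smul,
        Nat.add_sub_add_right, ← coeff, Nat.add_sub_add_right]
      have shift := descFactorial_smul_powSucc (C := C) (X := X) (le_refl (l + 1)) (n + 1)
      rw [Nat.add_sub_add_right, Nat.add_sub_add_right] at shift
      rw [← shift]
      push_cast
      module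

theorem powSucc_mul_powSucc (n k l : ℕ) :
    C.mul n (C.powSucc X k) (C.powSucc X l) =
      ((l + 1).descFactorial n : F) • C.powSucc X (k + l + 1 - n) := by
  induction k with
  | zero => simpa [powSucc] using mul_self_powSucc h₁ h₂ n l
  | succ k ih =>
    rw [powSucc, mul_zero_mul, ih, map_smul, show k + 1 + l + 1 - n = k + l + 1 + 1 - n by omega,
      descFactorial_smul_powSucc (by omega)]

end Presentation

section SquareZero

variable (C X) in
/-- The elements on which `X` acts from the right as `x` acts on its powers in
`Cend_{1,x}`: those `w` with `w ∘₁ X = w` and `w ∘ₙ X = 0` for `n ≥ 2`. -/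
def rightFixed : Submodule F E :=
  LinearMap.eqLocus ((C.mul 1).flip X) LinearMap.id ⊓
    ⨅ n : {n : ℕ // 2 ≤ n}, LinearMap.ker ((C.mul n).flip X)

theorem mem_rightFixed {w : E} :
    w ∈ C.rightFixed X ↔ C.mul 1 w X = w ∧ ∀ n, 2 ≤ n → C.mul n w X = 0 := by
  simp [rightFixed]

theorem mul_zero_mem_rightFixed (a : E) {w : E} (hw : w ∈ C.rightFixed X) :
    C.mul 0 a w ∈ C.rightFixed X := by
  rw [mem_rightFixed] at hw ⊢
  refine ⟨by rw [mul_zero_mul, hw.1], fun n hn => ?_⟩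
  rw [mul_zero_mul, hw.2 n hn, map_zero]

variable (h₁ : C.mul 1 X X = X)
include h₁

theorem mul_mem_rightFixed {v : E} (hv : ∀ m n, 2 ≤ n → C.mul m v (C.mul n X X) = 0) (m : ℕ) :
    C.mul m v X ∈ C.rightFixed X := by
  refine mem_rightFixed.2 ⟨?_, fun n hn => ?_⟩
  · rw [C.assoc, sum_range_succ', sum_eq_zero]
    · simp [h₁]
    · intro s _
      rw [hv _ _ (by omega), smul_zero]
  · rw [C.assoc]
    refine sum_eq_zero fun s _ => ?_
    rw [hv _ _ (by omega), smul_zero]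

/-- This is the associativity expansion of `X ∘ₖ₊₂ (X ∘₁ X) = X ∘ₖ₊₂ X`. -/
theorem neg_succ_smul_mul_self_eq (k : ℕ) :
    -(((k + 1 : ℕ) : F) • C.mul (k + 2) X X) = C.mul 0 X (C.mul (k + 3) X X) +
      ∑ s ∈ range (k + 1), ((k + 2).choose s : F) • C.mul (1 + s) (C.mul (k + 2 - s) X X) X := by
  have expand := C.mul_mul_eq_sum (k + 2) 1 X X X
  rw [h₁, sum_range_succ, sum_range_succ, Nat.sub_self, show k + 2 - (k + 1) = 1 by omega, h₁,
    mul_zero_mul, Nat.choose_self, Nat.choose_succ_self_right, Nat.cast_one, one_smul,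
    show 1 + (k + 1) = k + 2 by omega, show 1 + (k + 2) = k + 3 by omega] at expand
  rw [Nat.cast_succ] at expand ⊢
  linear_combination (norm := module) expand

variable [CharZero F]
  (hsq : ∀ i j m, 2 ≤ i → 2 ≤ j → C.mul m (C.mul i X X) (C.mul j X X) = 0)
include hsq

theorem mul_self_mem_rightFixed {n : ℕ} (hn : 2 ≤ n) : C.mul n X X ∈ C.rightFixed X := by
  obtain ⟨k, rfl⟩ := Nat.exists_eq_add_of_le' hn
  clear hn
  obtain ⟨N, hN⟩ := C.locality X X
  obtain ⟨K, hkK, hNK⟩ := exists_ge_ge k N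
  induction hkK using Nat.decreasingInduction with
  | self =>
    rw [hN _ (by omega)]
    exact zero_mem _
  | of_succ k _ ih =>
    have coeff_ne_zero : -((k + 1 : ℕ) : F) ≠ 0 := neg_ne_zero.2 (Nat.cast_ne_zero.2 k.succ_ne_zero)
    rw [← Submodule.smul_mem_iff _ coeff_ne_zero, neg_smul, neg_succ_smul_mul_self_eq h₁]
    refine add_mem (mul_zero_mem_rightFixed X ih) (sum_mem fun s hs => Submodule.smul_mem _ _ ?_)
    have hs := mem_range.1 hs
    exact mul_mem_rightFixed h₁ (fun m n hn => hsq _ n m (by omega) hn) _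

theorem mul_self_eq_zero_of_square_zero {n : ℕ} (hn : 2 ≤ n) : C.mul n X X = 0 := by
  obtain ⟨k, rfl⟩ := Nat.exists_eq_add_of_le' hn
  clear hn
  obtain ⟨N, hN⟩ := C.locality X X
  obtain ⟨K, hkK, hNK⟩ := exists_ge_ge k N
  induction hkK using Nat.decreasingInduction with
  | self => exact hN _ (by omega)
  | of_succ k _ ih =>
    have fixed {j : ℕ} (hj : 2 ≤ j) := mem_rightFixed.1 (mul_self_mem_rightFixed h₁ hsq hj)
    have sum_eq : ∑ s ∈ range (k + 1), ((k + 2).choose s : F) •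
        C.mul (1 + s) (C.mul (k + 2 - s) X X) X = C.mul (k + 2) X X := by
      rw [sum_range_succ', sum_eq_zero, Nat.choose_zero_right, Nat.cast_one, one_smul, zero_add,
        Nat.sub_zero, Nat.add_zero, (fixed le_add_self).1]
      intro s hs
      have hs := mem_range.1 hs
      rw [(fixed (by omega)).2 _ (by omega), smul_zero]
    have recurrence := neg_succ_smul_mul_self_eq h₁ k
    rw [ih, map_zero, zero_add, sum_eq] at recurrence
    have smul_eq_zero : ((k + 2 : ℕ) : F) • C.mul (k + 2) X X = 0 := by
      push_cast at recurrence ⊢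
      linear_combination (norm := module) (-1 : F) • recurrence
    exact (smul_eq_zero_iff_right (Nat.cast_ne_zero.2 (by omega))).1 smul_eq_zero

end SquareZero

/-- Homomorphisms of conformal algebras, as a property of the underlying linear map. -/
structure IsHom {A : Type*} [AddCommGroup A] [Module F A] (CA : ConfAlg F A) (CE : ConfAlg F E)
    (f : A →ₗ[F] E) : Prop where
  map_D : ∀ a, f (CA.D a) = CE.D (f a)
  map_mul : ∀ n a b, f (CA.mul n a b) = CE.mul n (f a) (f b)

namespace IsHom

variable {A G : Type*} [AddCommGroup A] [Module F A] [AddCommGroup G] [Module F G]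
  {CA : ConfAlg F A} {CG : ConfAlg F G}

theorem id (CA : ConfAlg F A) : IsHom CA CA LinearMap.id :=
  ⟨fun _ => rfl, fun _ _ _ => rfl⟩

theorem comp {g : E →ₗ[F] G} {f : A →ₗ[F] E} (hg : IsHom C CG g) (hf : IsHom CA C f) :
    IsHom CA CG (g ∘ₗ f) :=
  ⟨fun a => by simp [hf.map_D, hg.map_D], fun n a b => by simp [hf.map_mul, hg.map_mul]⟩

end IsHom

end ConfAlg

namespace IsCend1x

open ConfAlg

variable {F A E : Type*} [Field F] [AddCommGroup A] [Module F A] [AddCommGroup E] [Module F E]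
  {CA : ConfAlg F A} {xB : ℕ → A} (hX : IsCend1x CA xB)
include hX

theorem mul_one_self : CA.mul 1 (xB 1) (xB 1) = xB 1 := by
  simpa using hX.2.2 1 1 1 le_rfl le_rfl

theorem mul_self_eq_zero {n : ℕ} (hn : 2 ≤ n) : CA.mul n (xB 1) (xB 1) = 0 := by
  simp [hX.2.2 1 1 n le_rfl le_rfl, Nat.descFactorial_of_lt (show 1 < n by omega)]

theorem mul_zero_self (k : ℕ) : CA.mul 0 (xB 1) (xB (k + 1)) = xB (k + 2) := by
  simp [hX.2.2 1 (k + 1) 0 le_rfl (by omega), show 1 + (k + 1) = k + 2 by omega]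

theorem eq_top_of_forall_mem (S : Submodule F A) (hx : ∀ k, xB (k + 1) ∈ S)
    (hD : ∀ a ∈ S, CA.D a ∈ S) : S = ⊤ := by
  rw [eq_top_iff, ← hX.2.1, Submodule.span_le]
  rintro _ ⟨⟨i, k, hk⟩, rfl⟩
  obtain ⟨k, rfl⟩ := Nat.exists_eq_add_of_le' hk
  induction i with
  | zero => exact hx k
  | succ i ih =>
    simp only [pow_succ', Module.End.mul_apply]
    exact hD _ ih

theorem exists_linearMap (T : E →ₗ[F] E) (y : ℕ → E) :
    ∃ f : A →ₗ[F] E, (∀ a, f (CA.D a) = T (f a)) ∧ ∀ k, f (xB (k + 1)) = y k := by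
  let b := Module.Basis.mk hX.1 hX.2.1.ge
  let f : A →ₗ[F] E := b.constr F fun p => (T ^ p.1) (y (p.2.1 - 1))
  have f_apply (i k : ℕ) : f ((CA.D ^ i) (xB (k + 1))) = (T ^ i) (y k) := by
    have := b.constr_basis F (fun p => (T ^ p.1) (y (p.2.1 - 1))) (i, ⟨k + 1, by omega⟩)
    rwa [Module.Basis.mk_apply] at this
  have f_comp_D : f ∘ₗ CA.D = T ∘ₗ f := by
    refine b.ext ?_
    rintro ⟨i, k, hk⟩
    obtain ⟨k, rfl⟩ := Nat.exists_eq_add_of_le' hk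
    have := f_apply (i + 1) k
    rw [pow_succ', pow_succ', Module.End.mul_apply, Module.End.mul_apply] at this
    rw [Module.Basis.mk_apply, LinearMap.comp_apply, LinearMap.comp_apply, this, f_apply]
  exact ⟨f, LinearMap.congr_fun f_comp_D, fun k => f_apply 0 k⟩

theorem isHom_of_map_mul_generators {CE : ConfAlg F E} {f : A →ₗ[F] E}
    (hD : ∀ a, f (CA.D a) = CE.D (f a))
    (hmul : ∀ n k l, f (CA.mul n (xB (k + 1)) (xB (l + 1))) =
      CE.mul n (f (xB (k + 1))) (f (xB (l + 1)))) : IsHom CA CE f := by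
  let rightSet (a : A) : Submodule F A :=
    ⨅ n, LinearMap.eqLocus (f ∘ₗ CA.mul n a) (CE.mul n (f a) ∘ₗ f)
  let leftSet : Submodule F A :=
    ⨅ n, LinearMap.eqLocus ((CA.mul n).compr₂ f) ((CE.mul n).compl₁₂ f f)
  have mem_right {a b : A} : b ∈ rightSet a ↔ ∀ n, f (CA.mul n a b) = CE.mul n (f a) (f b) := by
    simp [rightSet]
  have mem_left {a : A} : a ∈ leftSet ↔ ∀ n b, f (CA.mul n a b) = CE.mul n (f a) (f b) := by
    simp [leftSet, LinearMap.ext_iff]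
  have right_eq_top (k : ℕ) : rightSet (xB (k + 1)) = ⊤ := by
    refine hX.eq_top_of_forall_mem _ (fun l => mem_right.2 fun n => hmul n k l) fun b hb => ?_
    rw [mem_right] at hb ⊢
    intro n
    simp [CA.D_right, CE.D_right, hD, hb]
  have left_eq_top : leftSet = ⊤ := by
    refine hX.eq_top_of_forall_mem _ (fun k => mem_left.2 fun n b => ?_) fun a ha => ?_
    · exact mem_right.1 (right_eq_top k ▸ Submodule.mem_top) n
    · rw [mem_left] at ha ⊢
      intro n b
      simp [CA.D_left, CE.D_left, hD, ha]
  exact ⟨hD, fun n a b => mem_left.1 (left_eq_top ▸ Submodule.mem_top) n b⟩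

theorem exists_isHom {CE : ConfAlg F E} {X : E} (h₁ : CE.mul 1 X X = X)
    (h₂ : ∀ n, 2 ≤ n → CE.mul n X X = 0) :
    ∃ f : A →ₗ[F] E, IsHom CA CE f ∧ f (xB 1) = X := by
  obtain ⟨f, hD, hf⟩ := hX.exists_linearMap CE.D (CE.powSucc X)
  refine ⟨f, hX.isHom_of_map_mul_generators hD fun n k l => ?_, hf 0⟩
  rw [hX.2.2 _ _ _ (by omega) (by omega), map_smul, hf, hf, powSucc_mul_powSucc h₁ h₂]
  rcases le_or_gt n (l + 1) with hn | hn
  · rw [show k + 1 + (l + 1) - n = k + l + 1 - n + 1 by omega, hf]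
  · simp [Nat.descFactorial_of_lt hn]

theorem isHom_ext {CE : ConfAlg F E} {f g : A →ₗ[F] E} (hf : IsHom CA CE f) (hg : IsHom CA CE g)
    (h : f (xB 1) = g (xB 1)) : f = g := by
  rw [← LinearMap.eqLocus_eq_top]
  refine hX.eq_top_of_forall_mem _ (fun k => ?_) fun a ha => ?_
  · induction k with
    | zero => exact h
    | succ k ih =>
      rw [LinearMap.mem_eqLocus] at ih ⊢
      rw [← hX.mul_zero_self, hf.map_mul, hg.map_mul, h, ih]
  · rw [LinearMap.mem_eqLocus] at ha ⊢
    rw [hf.map_D, hg.map_D, ha]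

end IsCend1x

section Extension

open ConfAlg

variable {F A M : Type*} [Field F] [AddCommGroup A] [Module F A] [AddCommGroup M] [Module F M]
  {CA : ConfAlg F A} {B : ConfBimod CA M} {φ : Cochain2 CA B}

theorem IsCocycle.alternating (hφ : IsCocycle φ) (n m : ℕ) (a b c : A) :
    φ.f m (CA.mul n a b) c + B.rmul m (φ.f n a b) c =
      ∑ s ∈ range (n + 1), ((-1 : F) ^ s * (n.choose s : F)) •
        (B.lmul (n - s) a (φ.f (m + s) b c) + φ.f (n - s) a (CA.mul (m + s) b c)) :=
  eq_alternating_sum_iff_eq_sum_choose_smul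
    (S := fun n m => B.lmul n a (φ.f m b c) + φ.f n a (CA.mul m b c))
    (T := fun n m => φ.f m (CA.mul n a b) c + B.rmul m (φ.f n a b) c) |>.2
      (fun n m => hφ n m a b c) n m

namespace Cochain2

variable (φ) in
/-- The product `(a, u) ∘ₙ (b, v) = (a ∘ₙ b, φₙ(a, b) + a ∘ₙ v + u ∘ₙ b)` on `A × M`. -/
def extensionMul (n : ℕ) : A × M →ₗ[F] A × M →ₗ[F] A × M :=
  LinearMap.mk₂ F
    (fun p q => (CA.mul n p.1 q.1, φ.f n p.1 q.1 + B.lmul n p.1 q.2 + B.rmul n p.2 q.1))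
    (fun p p' q => by
      simp only [Prod.fst_add, Prod.snd_add, map_add, LinearMap.add_apply, Prod.mk_add_mk]
      congr 1
      abel)
    (fun c p q => by ext <;> simp)
    (fun p q q' => by
      simp only [Prod.fst_add, Prod.snd_add, map_add, Prod.mk_add_mk]
      congr 1
      abel)
    (fun c p q => by ext <;> simp)

theorem extensionMul_apply (n : ℕ) (p q : A × M) :
    φ.extensionMul n p q =
      (CA.mul n p.1 q.1, φ.f n p.1 q.1 + B.lmul n p.1 q.2 + B.rmul n p.2 q.1) := rfl

theorem extensionMul_assoc (hφ : IsCocycle φ) (n m : ℕ) (p q r : A × M) :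
    φ.extensionMul m (φ.extensionMul n p q) r =
      ∑ s ∈ range (n + 1), ((-1 : F) ^ s * (n.choose s : F)) •
        φ.extensionMul (n - s) p (φ.extensionMul (m + s) q r) := by
  obtain ⟨a, u⟩ := p
  obtain ⟨b, v⟩ := q
  obtain ⟨c, w⟩ := r
  simp only [extensionMul_apply]
  ext
  · simp [Prod.fst_sum, CA.assoc]
  · have cocycle := hφ.alternating n m a b c
    simp only [Prod.snd_sum, Prod.smul_snd, map_add, LinearMap.add_apply, smul_add,
      sum_add_distrib, B.assoc_aau, B.assoc_aua, B.assoc_uaa] at cocycle ⊢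
    linear_combination (norm := module) cocycle

/-- The extension `0 → M → A × M → A → 0` of `A` by the ideal `M` with zero product, defined by the
cocycle `φ`. -/
def extension (φ : Cochain2 CA B) (hφ : IsCocycle φ) : ConfAlg F (A × M) where
  D := CA.D.prodMap B.D
  mul := φ.extensionMul
  locality p q := by
    obtain ⟨N₀, h₀⟩ := CA.locality p.1 q.1
    obtain ⟨N₁, h₁⟩ := φ.loc p.1 q.1
    obtain ⟨N₂, h₂⟩ := B.loc_left p.1 q.2
    obtain ⟨N₃, h₃⟩ := B.loc_right p.2 q.1
    refine ⟨N₀ + N₁ + N₂ + N₃, fun n hn => ?_⟩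
    simp [extensionMul_apply, h₀ n (by omega), h₁ n (by omega), h₂ n (by omega), h₃ n (by omega)]
  D_left n p q := by
    ext
    · simp [extensionMul_apply, CA.D_left]
    · simp only [LinearMap.prodMap_apply, extensionMul_apply, φ.D_left, B.D_la, B.D_ru,
        Prod.smul_mk, smul_add, Prod.neg_mk, neg_add_rev]
      abel
  D_right n p q := by
    ext
    · simp [extensionMul_apply, CA.D_right]
    · simp only [LinearMap.prodMap_apply, extensionMul_apply, φ.D_right, B.D_lu, B.D_ra, map_add,
        Prod.smul_mk, smul_add, Prod.mk_add_mk]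
      abel
  assoc := extensionMul_assoc hφ

variable (hφ : IsCocycle φ)

theorem extension_mul_apply (n : ℕ) (p q : A × M) :
    (φ.extension hφ).mul n p q =
      (CA.mul n p.1 q.1, φ.f n p.1 q.1 + B.lmul n p.1 q.2 + B.rmul n p.2 q.1) := rfl

theorem extension_mul_eq_zero {p q : A × M} (hp : p.1 = 0) (hq : q.1 = 0) (n : ℕ) :
    (φ.extension hφ).mul n p q = 0 := by
  simp [extension_mul_apply, hp, hq]

theorem isHom_fst : IsHom (φ.extension hφ) CA (LinearMap.fst F A M) :=
  ⟨fun _ => rfl, fun _ _ _ => rfl⟩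

theorem extension_mul_one_self {a : A} {ψ : M} (ha : CA.mul 1 a a = a)
    (hψ : φ.f 1 a a = B.lmul 1 a ψ - ψ + B.rmul 1 ψ a) :
    (φ.extension hφ).mul 1 (a, -ψ) (a, -ψ) = (a, -ψ) := by
  simp only [extension_mul_apply, ha, hψ, map_neg, LinearMap.neg_apply]
  congr 1
  abel

theorem isCoboundary_of_isHom_section {σ : A →ₗ[F] A × M} (hσ : IsHom CA (φ.extension hφ) σ)
    (fst_comp : LinearMap.fst F A M ∘ₗ σ = LinearMap.id) : IsCoboundary φ := by
  have fst_σ (a : A) : (σ a).1 = a := LinearMap.congr_fun fst_comp a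
  refine ⟨-(LinearMap.snd F A M ∘ₗ σ), fun a => ?_, fun n a b => ?_⟩
  · have : (σ (CA.D a)).2 = B.D (σ a).2 := congrArg Prod.snd (hσ.map_D a)
    simp [this]
  · have : (σ (CA.mul n a b)).2 = φ.f n a b + B.lmul n a (σ b).2 + B.rmul n (σ a).2 b := by
      rw [hσ.map_mul, extension_mul_apply, fst_σ, fst_σ]
    simp only [LinearMap.neg_apply, LinearMap.comp_apply, LinearMap.snd_apply, map_neg, this]
    abel

end Cochain2

end Extension

/-- **Lemma 3.** Let `φ` be a 2-cocycle of `Cend_{1,x}` with values in a conformal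
bimodule `M`. If there is `ψ₁ ∈ M` with `φ₁(x, x) = x ∘₁ ψ₁ − ψ₁ + ψ₁ ∘₁ x`,
then `φ` is a 2-coboundary. -/
theorem cocycle_isCoboundary_of_exists_psi {F : Type*} [Field F] [CharZero F]
    {A : Type*} [AddCommGroup A] [Module F A]
    {M : Type*} [AddCommGroup M] [Module F M]
    (CA : ConfAlg F A) (xB : ℕ → A) (hX : IsCend1x CA xB)
    (B : ConfBimod CA M) (φ : Cochain2 CA B) (hφ : IsCocycle φ)
    (hψ : ∃ ψ₁ : M,
      φ.f 1 (xB 1) (xB 1) = B.lmul 1 (xB 1) ψ₁ - ψ₁ + B.rmul 1 ψ₁ (xB 1)) :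
    IsCoboundary φ := by
  obtain ⟨ψ, hψ⟩ := hψ
  let E := φ.extension hφ
  let X : A × M := (xB 1, -ψ)
  have X_mul_one : E.mul 1 X X = X := Cochain2.extension_mul_one_self hφ hX.mul_one_self hψ
  have fst_X_mul (n : ℕ) (hn : 2 ≤ n) : (E.mul n X X).1 = 0 := hX.mul_self_eq_zero hn
  have X_mul (n : ℕ) (hn : 2 ≤ n) : E.mul n X X = 0 :=
    ConfAlg.mul_self_eq_zero_of_square_zero X_mul_one (fun i j m hi hj =>
      Cochain2.extension_mul_eq_zero hφ (fst_X_mul i hi) (fst_X_mul j hj) m) hn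
  obtain ⟨σ, hσ, σ_x⟩ := hX.exists_isHom X_mul_one X_mul
  have fst_comp : LinearMap.fst F A M ∘ₗ σ = LinearMap.id :=
    hX.isHom_ext ((Cochain2.isHom_fst hφ).comp hσ) (.id CA) (congrArg Prod.fst σ_x)
  exact Cochain2.isCoboundary_of_isHom_section hφ hσ fst_comp
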